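/- arXiv:2106.05839 — 4 statements merged into one kernel-verified Lean document; each statement's English description precedes it below -/
import Mathlib

section
/- Let D ≥ 2 and let X₀, X₁ ∈ ℝ^D satisfy (X₀,X₀) > 0 and (X₁,X₁) < 0 with respect to the Minkowski inner product, and set h := (X₀,X₀)(X₁,X₁) − (X₀,X₁)² (so h < 0). Suppose T = A(cosh φ · X₀ + sinh φ · X₁) with A > 0, φ ∈ ℝ, and S = B(sinh ψ · X₀ + cosh ψ · X₁) with B > 0, ψ ∈ ℝ, and that (T,S) = 0 and (T,T) + (S,S) = 0. Then T = (B/√(−h)) · [ −(cosh ψ · (X₁,X₁) + sinh ψ · (X₀,X₁)) · X₀ + (sinh ψ · (X₀,X₀) + cosh ψ · (X₀,X₁)) · X₁ ]. -/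
/-- Minkowski inner product on `ℝ^D`: `(v,w) = v₀w₀ − Σ_{i≥1} vᵢwᵢ`. -/
noncomputable def mink (D : ℕ) (v w : Fin D → ℝ) : ℝ :=
  ∑ i : Fin D, (if i.val = 0 then (1 : ℝ) else -1) * v i * w i

/-!
Contracting the bivector `x ∧ y` with `v` gives `(x,v) y - (y,v) x`. A change of basis
`t = p x + q y`, `u = r x + s y` multiplies `x ∧ y` by `d = p s - q r`, hence the contraction
by `d` and the Gram determinant `h` by `d²`. If `(t,u) = 0` and `(u,u) = -(t,t)`, then contracting
`t ∧ u` with `u` gives `(t,t) t`, and the Gram determinant of `t, u` is `-(t,t)²`. So `(t,t) t` is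
`d` times the contraction of `x ∧ y` with `u`, while `(t,t)² = d² (-h)`.

The sign of the square root comes from orthogonality: eliminating `(x,y)` gives
`(p s + q r) (t,t) = d (p² (x,x) - q² (y,y))`. For hyperbolic coefficients both `p s + q r` and
`d` are positive, so `(t,t) > 0` and `(t,t) = d √(-h)`.
-/

section BilinForm

variable {R M : Type*} [CommRing R] [AddCommGroup M] [Module R M]

/-- The Gram determinant of the pair `x, y`; for a symmetric form this is
`(x,x)(y,y) - (x,y)²`. -/
def gramDet (b : LinearMap.BilinForm R M) (x y : M) : R :=
  b x x * b y y - b x y * b y x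

/-- The contraction of the bivector `x ∧ y` with the vector `v`, a vector in the plane of `x` and
`y` orthogonal to `v`. -/
def wedgeContract (b : LinearMap.BilinForm R M) (x y v : M) : M :=
  b x v • y - b y v • x

variable {b : LinearMap.BilinForm R M} {x y t u : M} {p q r s : R}

theorem gramDet_smul_add_smul :
    gramDet b (p • x + q • y) (r • x + s • y) = (p * s - q * r) ^ 2 * gramDet b x y := by
  simp only [gramDet, map_add, map_smul, LinearMap.add_apply, LinearMap.smul_apply, smul_eq_mul]
  ring

theorem wedgeContract_smul_add_smul (v : M) :
    wedgeContract b (p • x + q • y) (r • x + s • y) v =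
      (p * s - q * r) • wedgeContract b x y v := by
  simp only [wedgeContract, map_add, map_smul, LinearMap.add_apply, LinearMap.smul_apply,
    smul_eq_mul]
  module

theorem gramDet_of_orthogonal_of_add_eq_zero (horth : b t u = 0) (hnull : b t t + b u u = 0) :
    gramDet b t u = -(b t t) ^ 2 := by
  rw [gramDet, horth, eq_neg_of_add_eq_zero_right hnull]
  ring

theorem wedgeContract_right_of_orthogonal_of_add_eq_zero (horth : b t u = 0)
    (hnull : b t t + b u u = 0) : wedgeContract b t u u = b t t • t := by
  rw [wedgeContract, horth, eq_neg_of_add_eq_zero_right hnull]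
  module

theorem mul_apply_self_of_orthogonal (hb : b.IsSymm)
    (horth : b (p • x + q • y) (r • x + s • y) = 0) :
    (p * s + q * r) * b (p • x + q • y) (p • x + q • y) =
      (p * s - q * r) * (p ^ 2 * b x x - q ^ 2 * b y y) := by
  simp only [map_add, map_smul, LinearMap.add_apply, LinearMap.smul_apply, smul_eq_mul,
    hb.eq y x] at horth ⊢
  linear_combination 2 * p * q * horth

theorem apply_self_pos_of_orthogonal [LinearOrder R] [IsStrictOrderedRing R] (hb : b.IsSymm)
    (hx : 0 < b x x) (hy : b y y ≤ 0) (hpqrs : |q * r| < p * s)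
    (horth : b (p • x + q • y) (r • x + s • y) = 0) :
    0 < b (p • x + q • y) (p • x + q • y) := by
  obtain ⟨hadd, hsub⟩ := abs_lt.mp hpqrs
  have hp : p ≠ 0 := by
    rintro rfl
    exact (abs_nonneg (q * r)).not_gt (by simpa using hpqrs)
  have hdiff : 0 < p ^ 2 * b x x - q ^ 2 * b y y := by
    have hpx : 0 < p ^ 2 * b x x := by positivity
    have hqy : q ^ 2 * b y y ≤ 0 := mul_nonpos_of_nonneg_of_nonpos (sq_nonneg q) hy
    linarith
  refine pos_of_mul_pos_right ?_ (by linarith : 0 ≤ p * s + q * r)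
  rw [mul_apply_self_of_orthogonal hb horth]
  exact mul_pos (by linarith) hdiff

end BilinForm

section Real

open Real

variable {V : Type*} [AddCommGroup V] [Module ℝ V] {b : LinearMap.BilinForm ℝ V} {x y : V}
  {p q r s : ℝ}

theorem apply_self_eq_mul_sqrt_neg_gramDet (hdet : 0 ≤ p * s - q * r)
    (hpos : 0 ≤ b (p • x + q • y) (p • x + q • y))
    (horth : b (p • x + q • y) (r • x + s • y) = 0)
    (hnull : b (p • x + q • y) (p • x + q • y) + b (r • x + s • y) (r • x + s • y) = 0) :
    b (p • x + q • y) (p • x + q • y) = (p * s - q * r) * √(-gramDet b x y) := by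
  have hsq : b (p • x + q • y) (p • x + q • y) ^ 2 = (p * s - q * r) ^ 2 * -gramDet b x y := by
    rw [mul_neg, ← gramDet_smul_add_smul, gramDet_of_orthogonal_of_add_eq_zero horth hnull, neg_neg]
  rw [← sqrt_sq hpos, hsq, sqrt_mul (sq_nonneg _), sqrt_sq hdet]

theorem eq_inv_sqrt_neg_gramDet_smul_wedgeContract (hb : b.IsSymm)
    (hx : 0 < b x x) (hy : b y y ≤ 0) (hpqrs : |q * r| < p * s)
    (horth : b (p • x + q • y) (r • x + s • y) = 0)
    (hnull : b (p • x + q • y) (p • x + q • y) + b (r • x + s • y) (r • x + s • y) = 0) :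
    p • x + q • y = (√(-gramDet b x y))⁻¹ • wedgeContract b x y (r • x + s • y) := by
  have hdet : 0 < p * s - q * r := sub_pos.mpr (abs_lt.mp hpqrs).2
  have hpos := apply_self_pos_of_orthogonal hb hx hy hpqrs horth
  have hnorm := apply_self_eq_mul_sqrt_neg_gramDet hdet.le hpos.le horth hnull
  have hsqrt : √(-gramDet b x y) ≠ 0 := right_ne_zero_of_mul (hnorm ▸ hpos.ne')
  have hcontract := wedgeContract_right_of_orthogonal_of_add_eq_zero horth hnull
  rw [wedgeContract_smul_add_smul, hnorm, mul_smul] at hcontract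
  rw [eq_inv_smul_iff₀ hsqrt]
  exact (smul_right_injective V hdet.ne' hcontract).symm

theorem abs_sinh_lt_cosh (z : ℝ) : |sinh z| < cosh z := by
  rw [abs_sinh, ← cosh_abs]
  exact sinh_lt_cosh |z|

theorem abs_mul_sinh_mul_mul_sinh_lt {A B : ℝ} (hA : 0 < A) (hB : 0 < B) (φ ψ : ℝ) :
    |A * sinh φ * (B * sinh ψ)| < A * cosh φ * (B * cosh ψ) := by
  rw [abs_mul, abs_mul, abs_mul, abs_of_pos hA, abs_of_pos hB]
  gcongr <;> exact abs_sinh_lt_cosh _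

theorem statement1_general (hb : b.IsSymm) (X0 X1 : V) (hX0 : 0 < b X0 X0) (hX1 : b X1 X1 ≤ 0)
    (A φ B ψ : ℝ) (hA : 0 < A) (hB : 0 < B)
    (h : ℝ) (hh : h = b X0 X0 * b X1 X1 - (b X0 X1) ^ 2) (T S : V)
    (hTdef : T = A • (cosh φ • X0 + sinh φ • X1))
    (hSdef : S = B • (sinh ψ • X0 + cosh ψ • X1))
    (horth : b T S = 0) (hnull : b T T + b S S = 0) :
    T = (B / √(-h)) •
      ((-(cosh ψ * b X1 X1 + sinh ψ * b X0 X1)) • X0 +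
       (sinh ψ * b X0 X0 + cosh ψ * b X0 X1) • X1) := by
  have hgram : h = gramDet b X0 X1 := by rw [hh, gramDet, hb.eq X1 X0, sq]
  rw [smul_add, smul_smul, smul_smul] at hTdef hSdef
  subst hTdef hSdef
  rw [eq_inv_sqrt_neg_gramDet_smul_wedgeContract hb hX0 hX1
    (abs_mul_sinh_mul_mul_sinh_lt hA hB φ ψ) horth hnull, ← hgram]
  simp only [wedgeContract, map_add, map_smul, smul_eq_mul, hb.eq X1 X0]
  module

end Real

/-- The Minkowski inner product `mink D` bundled as a bilinear form. -/
noncomputable def minkForm (D : ℕ) : LinearMap.BilinForm ℝ (Fin D → ℝ) :=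
  LinearMap.mk₂ ℝ (mink D)
    (fun v v' w => by simp [mink, mul_add, add_mul, Finset.sum_add_distrib])
    (fun c v w => by simp [mink, Finset.mul_sum, mul_assoc, mul_left_comm])
    (fun v w w' => by simp [mink, mul_add, Finset.sum_add_distrib])
    (fun c v w => by simp [mink, Finset.mul_sum, mul_left_comm])

theorem mink_comm (D : ℕ) (v w : Fin D → ℝ) : mink D v w = mink D w v :=
  Finset.sum_congr rfl fun _ _ => mul_right_comm _ _ _

theorem minkForm_isSymm (D : ℕ) : (minkForm D).IsSymm :=
  ⟨mink_comm D⟩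

theorem statement1 (D : ℕ) (hD : 2 ≤ D) (X0 X1 : Fin D → ℝ)
    (hX0 : 0 < mink D X0 X0) (hX1 : mink D X1 X1 < 0)
    (A φ B ψ : ℝ) (hA : 0 < A) (hB : 0 < B)
    (h : ℝ) (hh : h = mink D X0 X0 * mink D X1 X1 - (mink D X0 X1) ^ 2)
    (T S : Fin D → ℝ)
    (hTdef : T = A • (Real.cosh φ • X0 + Real.sinh φ • X1))
    (hSdef : S = B • (Real.sinh ψ • X0 + Real.cosh ψ • X1))
    (horth : mink D T S = 0) (hnull : mink D T T + mink D S S = 0) :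
    T = (B / Real.sqrt (-h)) •
      ((-(Real.cosh ψ * mink D X1 X1 + Real.sinh ψ * mink D X0 X1)) • X0 +
       (Real.sinh ψ * mink D X0 X0 + Real.cosh ψ * mink D X0 X1) • X1) :=
  statement1_general (minkForm_isSymm D) X0 X1 hX0 hX1.le A φ B ψ hA hB h hh T S
    hTdef hSdef horth hnull
end

section
/- Let U ⊆ ℝ² be open, let h be a C¹ Lorentzian metric on U, and let χ : U → ℝ be C² with □_h χ = 0 and ∂χ² := Σ_{α,β} h^{αβ} ∂_αχ ∂_βχ > 0 on U. Define vector fields t, s : U → ℝ² by t^α := (Σ_β h^{αβ} ∂_βχ)/∂χ² and s^α := (Σ_β ε^{αβ} ∂_βχ)/∂χ², where ε^{01} = −1/√(−det h) = −ε^{10}, ε^{00} = ε^{11} = 0. Then t and s commute on U: [t,s]^α := Σ_β (t^β ∂_β s^α − s^β ∂_β t^α) = 0 at every point of U. -/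
open Matrix

/-- Partial derivative `∂_α f` of a real-valued function on `ℝ²`. -/
noncomputable def pd (α : Fin 2) (f : (Fin 2 → ℝ) → ℝ) (x : Fin 2 → ℝ) : ℝ :=
  fderiv ℝ f x (Pi.single α 1)

/-- `∂χ² = Σ_{α,β} h^{αβ} ∂_αχ ∂_βχ` (with `h^{αβ}` the inverse-metric entries). -/
noncomputable def gradSq (h : (Fin 2 → ℝ) → Matrix (Fin 2) (Fin 2) ℝ)
    (χ : (Fin 2 → ℝ) → ℝ) (x : Fin 2 → ℝ) : ℝ :=
  ∑ α, ∑ β, (h x)⁻¹ α β * pd α χ x * pd β χ x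

/-- Wave operator in divergence form: `□_h χ = Σ_α ∂_α(√(−det h) Σ_β h^{αβ} ∂_βχ)`. -/
noncomputable def waveOp (h : (Fin 2 → ℝ) → Matrix (Fin 2) (Fin 2) ℝ)
    (χ : (Fin 2 → ℝ) → ℝ) (x : Fin 2 → ℝ) : ℝ :=
  ∑ α, pd α (fun y => Real.sqrt (-(h y).det) * ∑ β, (h y)⁻¹ α β * pd β χ y) x

/-- The antisymmetric array `ε^{αβ}` with `ε^{01} = −1/√(−det h)`. -/
noncomputable def eps (m : Matrix (Fin 2) (Fin 2) ℝ) : Matrix (Fin 2) (Fin 2) ℝ :=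
  !![0, -1 / Real.sqrt (-m.det); 1 / Real.sqrt (-m.det), 0]

/-!
In dimension two a pair of vector fields satisfies
`[V, W] = (div W) V - (div V) W + J∇(V ∧ W)`, where `J` is the rotation by a right angle.
If `V` and `W` are divergence free and `ρ := 1 / (V ∧ W)`, then `div (ρV) = dρ(V)`,
`div (ρW) = dρ(W)` and `ρV ∧ ρW = ρ`, so
`[ρV, ρW] = ρ (dρ(W) V - dρ(V) W) + J∇ρ`, which vanishes because
`dρ(W) V - dρ(V) W = -(V ∧ W) J∇ρ`.

This applies to `V^α = √(-det h) h^{αβ} ∂_βχ`, divergence free by the wave equation, and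
`W = J∇χ`, divergence free by equality of mixed partials: `V ∧ W = √(-det h) ∂χ²`, whence
`t = ρV` and `s = ρW`.
-/

open VectorField Topology

section MatrixEntries

variable {𝕜 E n : Type*} [NontriviallyNormedField 𝕜] [NormedAddCommGroup E] [NormedSpace 𝕜 E]
  [Fintype n] [DecidableEq n] {A : E → Matrix n n 𝕜} {x : E}

theorem differentiableAt_matrix_det (hA : ∀ i j, DifferentiableAt 𝕜 (fun y => A y i j) x) :
    DifferentiableAt 𝕜 (fun y => (A y).det) x := by
  simp only [Matrix.det_apply]
  exact DifferentiableAt.fun_sum fun σ _ => DifferentiableAt.fun_const_smul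
    (HasFDerivAt.finsetProd fun i _ => (hA (σ i) i).hasFDerivAt).differentiableAt _

theorem differentiableAt_matrix_adjugate_apply
    (hA : ∀ i j, DifferentiableAt 𝕜 (fun y => A y i j) x) (i j : n) :
    DifferentiableAt 𝕜 (fun y => (A y).adjugate i j) x := by
  simp only [Matrix.adjugate_apply]
  refine differentiableAt_matrix_det fun k l => ?_
  by_cases hk : k = j
  · simp only [hk, Matrix.updateRow_self]
    exact differentiableAt_const _
  · simpa only [Matrix.updateRow_ne hk] using hA k l

theorem differentiableAt_matrix_inv_apply
    (hA : ∀ i j, DifferentiableAt 𝕜 (fun y => A y i j) x) (hdet : (A x).det ≠ 0) (i j : n) :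
    DifferentiableAt 𝕜 (fun y => (A y)⁻¹ i j) x := by
  simp only [Matrix.inv_def, Ring.inverse_eq_inv', Matrix.smul_apply, smul_eq_mul]
  exact ((differentiableAt_matrix_det hA).inv hdet).mul
    (differentiableAt_matrix_adjugate_apply hA i j)

end MatrixEntries

theorem differentiableAt_fderiv_of_contDiffAt_two {𝕜 E F : Type*} [NontriviallyNormedField 𝕜]
    [NormedAddCommGroup E] [NormedSpace 𝕜 E] [NormedAddCommGroup F] [NormedSpace 𝕜 F]
    {f : E → F} {x : E} (hf : ContDiffAt 𝕜 2 f x) : DifferentiableAt 𝕜 (fderiv 𝕜 f) x :=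
  (hf.fderiv_right (m := 1) (by norm_num)).differentiableAt one_ne_zero

section PartialDerivatives

variable {f g : (Fin 2 → ℝ) → ℝ} {x : Fin 2 → ℝ}

theorem fderiv_eq_sum_pd (f : (Fin 2 → ℝ) → ℝ) (x v : Fin 2 → ℝ) :
    fderiv ℝ f x v = ∑ α, v α * pd α f x := by
  conv_lhs => rw [pi_eq_sum_univ' v, map_sum]
  simp only [map_smul, smul_eq_mul, pd]

theorem pd_mul (α : Fin 2) (hf : DifferentiableAt ℝ f x) (hg : DifferentiableAt ℝ g x) :
    pd α (fun y => f y * g y) x = f x * pd α g x + g x * pd α f x := by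
  simp [pd, fderiv_fun_mul hf hg]

theorem pd_sub (α : Fin 2) (hf : DifferentiableAt ℝ f x) (hg : DifferentiableAt ℝ g x) :
    pd α (fun y => f y - g y) x = pd α f x - pd α g x := by
  simp [pd, fderiv_fun_sub hf hg]

theorem pd_neg (α : Fin 2) : pd α (fun y => -f y) x = -pd α f x := by
  simp [pd, fderiv_fun_neg]

theorem differentiableAt_pd (hf : ContDiffAt ℝ 2 f x) (α : Fin 2) :
    DifferentiableAt ℝ (pd α f) x :=
  (differentiableAt_fderiv_of_contDiffAt_two hf).clm_apply (differentiableAt_const _)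

theorem pd_pd (hf : ContDiffAt ℝ 2 f x) (α β : Fin 2) :
    pd α (pd β f) x = fderiv ℝ (fderiv ℝ f) x (Pi.single α 1) (Pi.single β 1) := by
  change fderiv ℝ (fun y => fderiv ℝ f y (Pi.single β 1)) x (Pi.single α 1) = _
  rw [fderiv_clm_apply (differentiableAt_fderiv_of_contDiffAt_two hf) (differentiableAt_const _)]
  simp

theorem pd_pd_comm (hf : ContDiffAt ℝ 2 f x) (α β : Fin 2) :
    pd α (pd β f) x = pd β (pd α f) x := by
  rw [pd_pd hf, pd_pd hf]
  exact (hf.isSymmSndFDerivAt (by simp)).eq _ _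

end PartialDerivatives

section PlanarVectorFields

/-- The Euclidean divergence `Σ_α ∂_α V^α` of a vector field on `ℝ²`. -/
noncomputable def divergence (V : (Fin 2 → ℝ) → Fin 2 → ℝ) (x : Fin 2 → ℝ) : ℝ :=
  ∑ α, pd α (fun y => V y α) x

/-- The skew gradient `J∇f` on `ℝ²`, the gradient rotated counterclockwise by a right angle. -/
noncomputable def skewGrad (f : (Fin 2 → ℝ) → ℝ) (x : Fin 2 → ℝ) : Fin 2 → ℝ :=
  ![-pd 1 f x, pd 0 f x]

/-- The exterior product `v ∧ w` of two vectors of `ℝ²`, as a number. -/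
def wedge (v w : Fin 2 → ℝ) : ℝ :=
  v 0 * w 1 - v 1 * w 0

variable {V W : (Fin 2 → ℝ) → Fin 2 → ℝ} {f ρ : (Fin 2 → ℝ) → ℝ} {x : Fin 2 → ℝ}

theorem wedge_smul_smul (a b : ℝ) (v w : Fin 2 → ℝ) :
    wedge (a • v) (b • w) = a * (b * wedge v w) := by
  simp only [wedge, Pi.smul_apply, smul_eq_mul]
  ring

theorem wedge_skewGrad (v : Fin 2 → ℝ) (f : (Fin 2 → ℝ) → ℝ) (x : Fin 2 → ℝ) :
    wedge v (skewGrad f x) = fderiv ℝ f x v := by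
  simp only [wedge, skewGrad, fderiv_eq_sum_pd, Fin.sum_univ_two, cons_val_zero, cons_val_one]
  ring

theorem differentiableAt_wedge (hV : DifferentiableAt ℝ V x) (hW : DifferentiableAt ℝ W x) :
    DifferentiableAt ℝ (fun y => wedge (V y) (W y)) x := by
  unfold wedge
  fun_prop

theorem fderiv_smul_sub_fderiv_smul (f : (Fin 2 → ℝ) → ℝ) (x v w : Fin 2 → ℝ) :
    fderiv ℝ f x w • v - fderiv ℝ f x v • w = -(wedge v w • skewGrad f x) := by
  ext α
  fin_cases α <;> simp [fderiv_eq_sum_pd, wedge, skewGrad] <;> ring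

theorem differentiableAt_skewGrad (hf : ContDiffAt ℝ 2 f x) :
    DifferentiableAt ℝ (skewGrad f) x := by
  refine differentiableAt_pi.2 fun α => ?_
  fin_cases α
  · exact (differentiableAt_pd hf 1).neg
  · exact differentiableAt_pd hf 0

theorem divergence_skewGrad (hf : ContDiffAt ℝ 2 f x) : divergence (skewGrad f) x = 0 := by
  simp only [divergence, skewGrad, Fin.sum_univ_two, cons_val_zero, cons_val_one, pd_neg]
  rw [pd_pd_comm hf 0 1, neg_add_cancel]

theorem divergence_smul (hρ : DifferentiableAt ℝ ρ x) (hV : DifferentiableAt ℝ V x) :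
    divergence (fun y => ρ y • V y) x = ρ x * divergence V x + fderiv ℝ ρ x (V x) := by
  simp only [divergence, Pi.smul_apply, smul_eq_mul, fderiv_eq_sum_pd, Finset.mul_sum,
    pd_mul _ hρ (differentiableAt_pi.1 hV _), Finset.sum_add_distrib]

theorem fderiv_apply_eq_sum_pd (hV : DifferentiableAt ℝ V x) (v : Fin 2 → ℝ) (α : Fin 2) :
    fderiv ℝ V x v α = ∑ β, v β * pd β (fun y => V y α) x := by
  rw [← fderiv_eq_sum_pd, fderiv_apply hV]
  rfl

theorem lieBracket_apply (hV : DifferentiableAt ℝ V x) (hW : DifferentiableAt ℝ W x)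
    (α : Fin 2) :
    lieBracket ℝ V W x α =
      ∑ β, (V x β * pd β (fun y => W y α) x - W x β * pd β (fun y => V y α) x) := by
  rw [lieBracket, Pi.sub_apply, fderiv_apply_eq_sum_pd hV, fderiv_apply_eq_sum_pd hW,
    Finset.sum_sub_distrib]

theorem pd_wedge (hV : DifferentiableAt ℝ V x) (hW : DifferentiableAt ℝ W x) (α : Fin 2) :
    pd α (fun y => wedge (V y) (W y)) x =
      V x 0 * pd α (fun y => W y 1) x + W x 1 * pd α (fun y => V y 0) x -
        (V x 1 * pd α (fun y => W y 0) x + W x 0 * pd α (fun y => V y 1) x) := by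
  have hVi := differentiableAt_pi.1 hV
  have hWi := differentiableAt_pi.1 hW
  unfold wedge
  rw [pd_sub α ((hVi 0).fun_mul (hWi 1)) ((hVi 1).fun_mul (hWi 0)), pd_mul α (hVi 0) (hWi 1),
    pd_mul α (hVi 1) (hWi 0)]

theorem lieBracket_eq_divergence_smul_sub_add_skewGrad_wedge
    (hV : DifferentiableAt ℝ V x) (hW : DifferentiableAt ℝ W x) :
    lieBracket ℝ V W x =
      divergence W x • V x - divergence V x • W x + skewGrad (fun y => wedge (V y) (W y)) x := by
  ext α
  rw [lieBracket_apply hV hW]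
  fin_cases α <;> simp [divergence, skewGrad, pd_wedge hV hW] <;> ring

theorem lieBracket_inv_wedge_smul_eq_zero
    (hV : DifferentiableAt ℝ V x) (hW : DifferentiableAt ℝ W x)
    (hdivV : divergence V x = 0) (hdivW : divergence W x = 0) (hVW : wedge (V x) (W x) ≠ 0) :
    lieBracket ℝ (fun y => (wedge (V y) (W y))⁻¹ • V y)
      (fun y => (wedge (V y) (W y))⁻¹ • W y) x = 0 := by
  set ρ : (Fin 2 → ℝ) → ℝ := fun y => (wedge (V y) (W y))⁻¹
  have hρ : DifferentiableAt ℝ ρ x := (differentiableAt_wedge hV hW).inv hVW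
  have wedge_eq : (fun y => wedge (ρ y • V y) (ρ y • W y)) = ρ := by
    funext y
    simpa only [wedge_smul_smul, ρ, inv_inv, mul_assoc] using mul_self_mul_inv (ρ y)
  calc lieBracket ℝ (fun y => ρ y • V y) (fun y => ρ y • W y) x
      = fderiv ℝ ρ x (W x) • ρ x • V x - fderiv ℝ ρ x (V x) • ρ x • W x + skewGrad ρ x := by
        rw [lieBracket_eq_divergence_smul_sub_add_skewGrad_wedge (hρ.fun_smul hV)
            (hρ.fun_smul hW),
          divergence_smul hρ hV, divergence_smul hρ hW, hdivV, hdivW, wedge_eq]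
        simp only [mul_zero, zero_add]
    _ = ρ x • (fderiv ℝ ρ x (W x) • V x - fderiv ℝ ρ x (V x) • W x) + skewGrad ρ x := by
        rw [smul_sub, smul_comm (ρ x), smul_comm (ρ x)]
    _ = 0 := by
        rw [fderiv_smul_sub_fderiv_smul, smul_neg, smul_smul, inv_mul_cancel₀ hVW, one_smul,
          neg_add_cancel]

end PlanarVectorFields

section WaveEquation

/-- The densitized gradient `√(-det h) h^{αβ} ∂_βχ`, whose divergence is `□_h χ`. -/
noncomputable def gradDensity (h : (Fin 2 → ℝ) → Matrix (Fin 2) (Fin 2) ℝ)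
    (χ : (Fin 2 → ℝ) → ℝ) (x : Fin 2 → ℝ) : Fin 2 → ℝ :=
  fun α => √(-(h x).det) * ∑ β, (h x)⁻¹ α β * pd β χ x

variable {h : (Fin 2 → ℝ) → Matrix (Fin 2) (Fin 2) ℝ} {χ : (Fin 2 → ℝ) → ℝ} {x : Fin 2 → ℝ}

theorem divergence_gradDensity : divergence (gradDensity h χ) x = waveOp h χ x :=
  rfl

theorem differentiableAt_gradDensity (hh : ∀ α β, DifferentiableAt ℝ (fun y => h y α β) x)
    (hdet : (h x).det ≠ 0) (hχ : ContDiffAt ℝ 2 χ x) :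
    DifferentiableAt ℝ (gradDensity h χ) x :=
  differentiableAt_pi.2 fun α =>
    ((differentiableAt_matrix_det hh).neg.sqrt (neg_ne_zero.2 hdet)).mul <|
      DifferentiableAt.fun_sum fun β _ =>
        (differentiableAt_matrix_inv_apply hh hdet α β).mul (differentiableAt_pd hχ β)

theorem wedge_gradDensity_skewGrad (h : (Fin 2 → ℝ) → Matrix (Fin 2) (Fin 2) ℝ)
    (χ : (Fin 2 → ℝ) → ℝ) (x : Fin 2 → ℝ) :
    wedge (gradDensity h χ x) (skewGrad χ x) = √(-(h x).det) * gradSq h χ x := by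
  simp only [wedge_skewGrad, fderiv_eq_sum_pd, gradDensity, gradSq, Fin.sum_univ_two]
  ring

theorem sum_inv_mul_pd_div_gradSq (hdet : (h x).det < 0) (α : Fin 2) :
    (∑ β, (h x)⁻¹ α β * pd β χ x) / gradSq h χ x =
      ((wedge (gradDensity h χ x) (skewGrad χ x))⁻¹ • gradDensity h χ x) α := by
  have hsqrt : √(-(h x).det) ≠ 0 := (Real.sqrt_pos.2 (neg_pos.2 hdet)).ne'
  rw [wedge_gradDensity_skewGrad, Pi.smul_apply, smul_eq_mul, inv_mul_eq_div, gradDensity,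
    mul_div_mul_left _ _ hsqrt]

theorem sum_eps_mul_pd_div_gradSq (h : (Fin 2 → ℝ) → Matrix (Fin 2) (Fin 2) ℝ)
    (χ : (Fin 2 → ℝ) → ℝ) (x : Fin 2 → ℝ) (α : Fin 2) :
    (∑ β, eps (h x) α β * pd β χ x) / gradSq h χ x =
      ((wedge (gradDensity h χ x) (skewGrad χ x))⁻¹ • skewGrad χ x) α := by
  rw [wedge_gradDensity_skewGrad]
  fin_cases α <;> simp [eps, skewGrad] <;> ring

end WaveEquation

theorem statement3_general (h : (Fin 2 → ℝ) → Matrix (Fin 2) (Fin 2) ℝ)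
    (χ : (Fin 2 → ℝ) → ℝ) (x : Fin 2 → ℝ)
    (hh : ∀ α β, DifferentiableAt ℝ (fun y => h y α β) x) (hdet : (h x).det < 0)
    (hχ : ContDiffAt ℝ 2 χ x) (hwave : waveOp h χ x = 0) (hgrad : gradSq h χ x ≠ 0)
    (t s : (Fin 2 → ℝ) → Fin 2 → ℝ)
    (ht : ∀ y α, t y α = (∑ β, (h y)⁻¹ α β * pd β χ y) / gradSq h χ y)
    (hs : ∀ y α, s y α = (∑ β, eps (h y) α β * pd β χ y) / gradSq h χ y) (α : Fin 2) :
    ∑ β, (t x β * pd β (fun y => s y α) x - s x β * pd β (fun y => t y α) x) = 0 := by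
  have hV : DifferentiableAt ℝ (gradDensity h χ) x := differentiableAt_gradDensity hh hdet.ne hχ
  have hW : DifferentiableAt ℝ (skewGrad χ) x := differentiableAt_skewGrad hχ
  have hVW : wedge (gradDensity h χ x) (skewGrad χ x) ≠ 0 := by
    rw [wedge_gradDensity_skewGrad]
    exact mul_ne_zero (Real.sqrt_pos.2 (neg_pos.2 hdet)).ne' hgrad
  have hρ := (differentiableAt_wedge hV hW).fun_inv hVW
  have t_eq : t =ᶠ[𝓝 x]
      fun y => (wedge (gradDensity h χ y) (skewGrad χ y))⁻¹ • gradDensity h χ y := by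
    filter_upwards [(differentiableAt_matrix_det hh).continuousAt.eventually_lt_const hdet]
      with y hy
    exact funext fun β => (ht y β).trans (sum_inv_mul_pd_div_gradSq hy β)
  have s_eq : s = fun y => (wedge (gradDensity h χ y) (skewGrad χ y))⁻¹ • skewGrad χ y :=
    funext fun y => funext fun β => (hs y β).trans (sum_eps_mul_pd_div_gradSq h χ y β)
  have ht_diff : DifferentiableAt ℝ t x := (hρ.fun_smul hV).congr_of_eventuallyEq t_eq
  have hs_diff : DifferentiableAt ℝ s x := s_eq ▸ hρ.fun_smul hW
  rw [← lieBracket_apply ht_diff hs_diff, t_eq.lieBracket_vectorField_eq s_eq.eventuallyEq,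
    lieBracket_inv_wedge_smul_eq_zero hV hW (divergence_gradDensity.trans hwave)
      (divergence_skewGrad hχ) hVW, Pi.zero_apply]

theorem statement3 (U : Set (Fin 2 → ℝ)) (hU : IsOpen U)
    (h : (Fin 2 → ℝ) → Matrix (Fin 2) (Fin 2) ℝ)
    (hsymm : ∀ x ∈ U, (h x).IsSymm) (hdet : ∀ x ∈ U, (h x).det < 0)
    (hC1 : ∀ α β : Fin 2, ContDiffOn ℝ 1 (fun x => h x α β) U)
    (χ : (Fin 2 → ℝ) → ℝ) (hχ : ContDiffOn ℝ 2 χ U)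
    (hwave : ∀ x ∈ U, waveOp h χ x = 0)
    (hpos : ∀ x ∈ U, 0 < gradSq h χ x)
    (t s : (Fin 2 → ℝ) → Fin 2 → ℝ)
    (htdef : ∀ x α, t x α = (∑ β, (h x)⁻¹ α β * pd β χ x) / gradSq h χ x)
    (hsdef : ∀ x α, s x α = (∑ β, eps (h x) α β * pd β χ x) / gradSq h χ x) :
    ∀ x ∈ U, ∀ α : Fin 2,
      ∑ β, (t x β * pd β (fun y => s y α) x - s x β * pd β (fun y => t y α) x) = 0 := by
  intro x hx
  have hUx := hU.mem_nhds hx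
  exact statement3_general h χ x
    (fun α β => ((hC1 α β).contDiffAt hUx).differentiableAt one_ne_zero) (hdet x hx)
    (hχ.contDiffAt hUx) (hwave x hx) (hpos x hx).ne' t s htdef hsdef
end

section
/- Let η_l, η_r : ℝ → ℝ be C¹ functions with η_l(x) > η_r(x) for all x ∈ ℝ, and suppose there exist constants ε, M with 0 < ε ≤ M < ∞ such that ε ≤ η_l′(x) ≤ M and ε ≤ η_r′(x) ≤ M for all x ∈ ℝ. Then there exist C¹ functions F, G : ℝ → ℝ with F′ > 0 and G′ > 0 everywhere which are surjective onto ℝ (hence C¹ diffeomorphisms of the real line), such that G(η_l(x)) = F(x) and G(η_r(x)) = F(x) − 2π for all x ∈ ℝ. -/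
open Real

open Filter Set Function
open scoped Topology ContDiff

/-!
The map `f = ηl ∘ ηr⁻¹` is an increasing diffeomorphism of the line with `y < f y`, and `G` must
solve Abel's equation `G (f y) = G y + c`; then `F = G ∘ ηl`. A solution with `c = 1` is obtained
from a smooth step `H`, equal to `0` near `-∞` and to `1` near `+∞`, by summing `H ∘ f ^ k` over
all integers `k`. Every orbit of `f` runs from `-∞` to `+∞`, so subtracting `1` from the terms with
`k ≥ 0` makes the sum locally finite, and replacing `y` by `f y` shifts the index, so that exactly
one `1` fewer is subtracted. If `H' > 0` on a fundamental domain `[p, f p)`, which every orbit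
meets, then `G' > 0`.
-/

section Orbits

variable {α : Type*}

theorem zpow_add_one_apply [LE α] (f : α ≃o α) (k : ℤ) (x : α) :
    (f ^ (k + 1)) x = f ((f ^ k) x) := by
  rw [add_comm, zpow_one_add, RelIso.mul_apply]

theorem strictMono_zpow_apply [Preorder α] {f : α ≃o α} (hf : ∀ x, x < f x) (x : α) :
    StrictMono fun k : ℤ ↦ (f ^ k) x :=
  strictMono_int_of_lt_succ fun k ↦ by
    simpa only [zpow_add_one_apply] using hf ((f ^ k) x)

variable [ConditionallyCompleteLinearOrder α] {f : α ≃o α}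

theorem exists_lt_zpow_apply (hf : ∀ x, x < f x) (x b : α) : ∃ k : ℤ, b < (f ^ k) x := by
  by_contra! hb
  set s := range fun k : ℤ ↦ (f ^ k) x
  have hs : IsLUB s (sSup s) := isLUB_csSup (range_nonempty _) ⟨b, forall_mem_range.2 hb⟩
  -- `s` is invariant under `f`, hence `f⁻¹ (sup s)` is again an upper bound.
  have hub : f.symm (sSup s) ∈ upperBounds s := forall_mem_range.2 fun k ↦
    f.le_symm_apply.2 (zpow_add_one_apply f k x ▸ hs.1 (mem_range_self (k + 1)))
  exact (hf (f.symm (sSup s))).not_ge (by simpa using hs.2 hub)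

theorem exists_zpow_apply_lt (hf : ∀ x, x < f x) (x b : α) : ∃ k : ℤ, (f ^ k) x < b := by
  obtain ⟨k, hk⟩ := exists_lt_zpow_apply hf b x
  refine ⟨-k, ?_⟩
  rw [zpow_neg]
  exact (f ^ k).symm_apply_lt.2 hk

theorem tendsto_zpow_apply_atTop (hf : ∀ x, x < f x) (x : α) :
    Tendsto (fun k : ℤ ↦ (f ^ k) x) atTop atTop :=
  tendsto_atTop_atTop_of_monotone (strictMono_zpow_apply hf x).monotone fun b ↦
    (exists_lt_zpow_apply hf x b).imp fun _ ↦ le_of_lt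

theorem tendsto_zpow_apply_atBot (hf : ∀ x, x < f x) (x : α) :
    Tendsto (fun k : ℤ ↦ (f ^ k) x) atBot atBot :=
  tendsto_atBot_atBot_of_monotone (strictMono_zpow_apply hf x).monotone fun b ↦
    (exists_zpow_apply_lt hf x b).imp fun _ ↦ le_of_lt

theorem exists_zpow_apply_mem_Ico (hf : ∀ x, x < f x) (x p : α) :
    ∃ k : ℤ, (f ^ k) x ∈ Ico p (f p) := by
  obtain ⟨N, hN⟩ := exists_lt_zpow_apply hf x (f p)
  obtain ⟨k, hk, hmax⟩ := Int.exists_greatest_of_bdd (P := fun k ↦ (f ^ k) x < f p)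
    ⟨N, fun k hk ↦ (strictMono_zpow_apply hf x).le_iff_le.1 (hk.trans hN).le⟩
    (exists_zpow_apply_lt hf x (f p))
  refine ⟨k, f.le_iff_le.1 ?_, hk⟩
  rw [← zpow_add_one_apply]
  by_contra! hlt
  exact (lt_add_one k).not_ge (hmax _ hlt)

end Orbits

section OrbitSum

variable {α : Type*}

/-- The `k`-th term of the orbit sum of a step function `H` along the orbits of `f`. Subtracting
the limiting value `1` for `k ≥ 0` makes the terms vanish for large `|k|`. -/
noncomputable def orbitTerm [LE α] (f : α ≃o α) (H : α → ℝ) (k : ℤ) (x : α) : ℝ :=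
  H ((f ^ k) x) - (Ici 0).indicator 1 k

/-- The orbit sum of a step function `H`, a solution `G` of Abel's equation
`G (f x) = G x + 1`. It is only meaningful where finitely many terms are nonzero. -/
noncomputable def orbitSum [LE α] (f : α ≃o α) (H : α → ℝ) (x : α) : ℝ :=
  ∑ᶠ k, orbitTerm f H k x

theorem orbitTerm_apply_self [LE α] (f : α ≃o α) (H : α → ℝ) (k : ℤ) (x : α) :
    orbitTerm f H k (f x) = orbitTerm f H (k + 1) x + (Pi.single (-1) 1 : ℤ → ℝ) k := by
  have hindicator : (Ici 0).indicator 1 (k + 1) =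
      (Ici 0).indicator 1 k + (Pi.single (-1) 1 : ℤ → ℝ) k := by
    simp only [indicator_apply, Pi.single_apply, mem_Ici, Pi.one_apply]
    split_ifs <;> first | omega | norm_num
  rw [orbitTerm, orbitTerm, hindicator, zpow_add_one, RelIso.mul_apply]
  ring

variable [ConditionallyCompleteLinearOrder α] {f : α ≃o α} {H : α → ℝ}

theorem eventually_cofinite_orbitTerm_eq_zero (hf : ∀ x, x < f x)
    (hbot : ∀ᶠ y in atBot, H y = 0) (htop : ∀ᶠ y in atTop, H y = 1) (a b : α) :
    ∀ᶠ k in cofinite, ∀ y ∈ Icc a b, orbitTerm f H k y = 0 := by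
  have : Nonempty α := ⟨a⟩
  obtain ⟨l, hl⟩ := eventually_atBot.1 hbot
  obtain ⟨u, hu⟩ := eventually_atTop.1 htop
  rw [Int.cofinite_eq, eventually_sup]
  constructor
  · filter_upwards [(tendsto_zpow_apply_atBot hf b).eventually_le_atBot l,
      eventually_lt_atBot 0] with k hkl hk y hy
    simp [orbitTerm, hl _ (((f ^ k).monotone hy.2).trans hkl), hk]
  · filter_upwards [(tendsto_zpow_apply_atTop hf a).eventually_ge_atTop u,
      eventually_ge_atTop 0] with k hku hk y hy
    simp [orbitTerm, hu _ (hku.trans ((f ^ k).monotone hy.1)), hk]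

theorem locallyFinite_support_orbitTerm [TopologicalSpace α] [OrderTopology α]
    (hf : ∀ x, x < f x) (hbot : ∀ᶠ y in atBot, H y = 0) (htop : ∀ᶠ y in atTop, H y = 1) :
    LocallyFinite fun k ↦ support (orbitTerm f H k) := by
  intro x
  have hmem : Icc (f.symm x) (f x) ∈ 𝓝 x := Icc_mem_nhds (f.symm_apply_lt.2 (hf x)) (hf x)
  refine ⟨_, hmem, (eventually_cofinite.1
    (eventually_cofinite_orbitTerm_eq_zero hf hbot htop (f.symm x) (f x))).subset ?_⟩
  rintro k ⟨y, hy, hy_mem⟩ hzero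
  exact hy (hzero y hy_mem)

theorem orbitSum_apply_self (hf : ∀ x, x < f x)
    (hbot : ∀ᶠ y in atBot, H y = 0) (htop : ∀ᶠ y in atTop, H y = 1) (x : α) :
    orbitSum f H (f x) = orbitSum f H x + 1 := by
  have hfin : (support fun k ↦ orbitTerm f H k x).Finite :=
    eventually_cofinite.1 <| (eventually_cofinite_orbitTerm_eq_zero hf hbot htop x x).mono
      fun k hk ↦ hk x (left_mem_Icc.2 le_rfl)
  have hfin_shift : (support fun k ↦ orbitTerm f H (k + 1) x).Finite :=
    hfin.preimage (add_left_injective 1).injOn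
  have hfin_single : (support (Pi.single (-1) 1 : ℤ → ℝ)).Finite :=
    (finite_singleton _).subset Pi.support_single_subset
  calc orbitSum f H (f x)
      = ∑ᶠ k, (orbitTerm f H (k + 1) x + (Pi.single (-1) 1 : ℤ → ℝ) k) :=
        finsum_congr fun k ↦ orbitTerm_apply_self f H k x
    _ = ∑ᶠ k, orbitTerm f H (k + 1) x + ∑ᶠ k, (Pi.single (-1) 1 : ℤ → ℝ) k :=
        finsum_add_distrib hfin_shift hfin_single
    _ = orbitSum f H x + 1 := by
        congr 1
        · exact finsum_comp_equiv (Equiv.addRight (1 : ℤ)) (f := fun k ↦ orbitTerm f H k x)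
        · rw [finsum_eq_single _ (-1) fun k hk ↦ Pi.single_eq_of_ne hk _, Pi.single_eq_same]

end OrbitSum

section Calculus

theorem contDiff_finsum {𝕜 E V ι : Type*} [NontriviallyNormedField 𝕜] [NormedAddCommGroup E]
    [NormedSpace 𝕜 E] [NormedAddCommGroup V] [NormedSpace 𝕜 V] {n : ℕ∞ω} {u : ι → E → V}
    (hu : ∀ i, ContDiff 𝕜 n (u i)) (hfin : LocallyFinite fun i ↦ support (u i)) :
    ContDiff 𝕜 n fun x ↦ ∑ᶠ i, u i x := by
  refine contDiff_iff_contDiffAt.2 fun x ↦ ?_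
  obtain ⟨s, hs⟩ := finsum_eventually_eq_sum hfin x
  exact (ContDiff.sum fun i _ ↦ hu i).contDiffAt.congr_of_eventuallyEq hs

theorem deriv_finsum_pos {ι : Type*} {u : ι → ℝ → ℝ} {x : ℝ}
    (hu : ∀ i, DifferentiableAt ℝ (u i) x) (hfin : LocallyFinite fun i ↦ support (u i))
    (hnonneg : ∀ i, 0 ≤ deriv (u i) x) (hpos : ∃ i, 0 < deriv (u i) x) :
    0 < deriv (fun y ↦ ∑ᶠ i, u i y) x := by
  obtain ⟨s, hs⟩ := hfin.exists_finset_support x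
  have hsum : (fun y ↦ ∑ᶠ i, u i y) =ᶠ[𝓝 x] fun y ↦ ∑ i ∈ s, u i y :=
    hs.mono fun y hy ↦ finsum_eq_sum_of_support_subset _ hy
  have hderiv_zero : ∀ i ∉ s, deriv (u i) x = 0 := fun i hi ↦ by
    have hzero : u i =ᶠ[𝓝 x] fun _ ↦ 0 := hs.mono fun y hy ↦ notMem_support.1 (mt (@hy i) hi)
    rw [hzero.deriv_eq, deriv_const]
  obtain ⟨i, hi⟩ := hpos
  rw [hsum.deriv_eq, deriv_fun_sum fun i _ ↦ hu i]
  exact Finset.sum_pos' (fun i _ ↦ hnonneg i)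
    ⟨i, not_imp_comm.1 (hderiv_zero i) hi.ne', hi⟩

theorem surjective_of_le_deriv {φ : ℝ → ℝ} {ε : ℝ} (hφ : Differentiable ℝ φ) (hε : 0 < ε)
    (hφ' : ∀ x, ε ≤ deriv φ x) : Surjective φ := by
  have growth : ∀ ⦃x y⦄, x ≤ y → ε * (y - x) ≤ φ y - φ x :=
    mul_sub_le_image_sub_of_le_deriv hφ hφ'
  have hline_top : Tendsto (fun x ↦ φ 0 + ε * x) atTop atTop :=
    tendsto_atTop_add_const_left _ _ (tendsto_id.const_mul_atTop hε)
  have hline_bot : Tendsto (fun x ↦ φ 0 + ε * x) atBot atBot :=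
    tendsto_atBot_add_const_left _ _ (tendsto_id.const_mul_atBot hε)
  refine hφ.continuous.surjective
    (tendsto_atTop_mono' _ ?_ hline_top) (tendsto_atBot_mono' _ ?_ hline_bot)
  · filter_upwards [eventually_ge_atTop 0] with x hx
    linarith [growth hx]
  · filter_upwards [eventually_le_atBot 0] with x hx
    linarith [growth hx]

theorem surjective_of_apply_eq_add_one {X : Type*} [TopologicalSpace X] [PreconnectedSpace X]
    [Nonempty X] {G : X → ℝ} (hG : Continuous G) (f : X ≃ X) (hGf : ∀ x, G (f x) = G x + 1) :
    Surjective G := by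
  intro y
  obtain ⟨x⟩ := ‹Nonempty X›
  have hup (n : ℕ) : G (f^[n] x) = G x + n := by
    induction n with
    | zero => simp
    | succ n ih => rw [iterate_succ_apply', hGf, ih]; push_cast; ring
  have hdown (n : ℕ) : G (f.symm^[n] x) = G x - n := by
    induction n with
    | zero => simp
    | succ n ih =>
      have hstep := hGf (f.symm (f.symm^[n] x))
      rw [f.apply_symm_apply, ih] at hstep
      rw [iterate_succ_apply']
      push_cast
      linarith
  obtain ⟨m, hm⟩ := exists_nat_ge (G x - y)
  obtain ⟨n, hn⟩ := exists_nat_ge (y - G x)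
  exact mem_range_of_exists_le_of_exists_ge hG
    ⟨f.symm^[m] x, by linarith [hdown m]⟩ ⟨f^[n] x, by linarith [hup n]⟩

end Calculus

section SmoothStep

theorem hasDerivAt_expNegInvGlue (x : ℝ) :
    HasDerivAt expNegInvGlue (x⁻¹ ^ 2 * expNegInvGlue x) x := by
  simpa using expNegInvGlue.hasDerivAt_polynomial_eval_inv_mul 1 x

theorem hasDerivAt_smoothTransition (x : ℝ) :
    HasDerivAt smoothTransition ((x⁻¹ ^ 2 + (1 - x)⁻¹ ^ 2) *
      (expNegInvGlue x * expNegInvGlue (1 - x)) / (expNegInvGlue x + expNegInvGlue (1 - x)) ^ 2)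
      x := by
  have hnum := hasDerivAt_expNegInvGlue x
  have hden := hnum.fun_add ((hasDerivAt_expNegInvGlue (1 - x)).comp_const_sub 1 x)
  convert! hnum.fun_div hden (smoothTransition.pos_denom x).ne' using 1
  ring

theorem deriv_smoothTransition_pos {x : ℝ} (hx : x ∈ Ioo 0 1) : 0 < deriv smoothTransition x := by
  have hx₀ : 0 < x := hx.1
  have hglue₀ := expNegInvGlue.pos_of_pos hx₀
  have hglue₁ := expNegInvGlue.pos_of_pos (sub_pos.2 hx.2)
  rw [(hasDerivAt_smoothTransition x).deriv]
  positivity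

theorem exists_contDiff_step {a b : ℝ} (hab : a < b) :
    ∃ H : ℝ → ℝ, ContDiff ℝ ∞ H ∧ Monotone H ∧ (∀ x ≤ a, H x = 0) ∧ (∀ x ≥ b, H x = 1) ∧
      ∀ x ∈ Ioo a b, 0 < deriv H x := by
  have hba : 0 < b - a := sub_pos.2 hab
  refine ⟨smoothTransition ∘ fun x ↦ (x - a) / (b - a), ?_, ?_, fun x hx ↦ ?_, fun x hx ↦ ?_,
    fun x hx ↦ ?_⟩
  · exact smoothTransition.contDiff.comp ((contDiff_id.sub contDiff_const).div_const _)
  · exact smoothTransition.monotone.comp fun x y hxy ↦ by gcongr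
  · exact smoothTransition.zero_of_nonpos (div_nonpos_of_nonpos_of_nonneg (by linarith) hba.le)
  · exact smoothTransition.one_of_one_le ((one_le_div hba).2 (by linarith))
  · have hmem : (x - a) / (b - a) ∈ Ioo (0 : ℝ) 1 :=
      ⟨div_pos (sub_pos.2 hx.1) hba, (div_lt_one hba).2 (by linarith [hx.2])⟩
    have hinner : HasDerivAt (fun x ↦ (x - a) / (b - a)) (1 / (b - a)) x :=
      ((hasDerivAt_id x).sub_const a).div_const _
    have houter := (differentiableAt_of_deriv_ne_zero
      (deriv_smoothTransition_pos hmem).ne').hasDerivAt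
    rw [(houter.comp x hinner).deriv]
    exact mul_pos (deriv_smoothTransition_pos hmem) (one_div_pos.2 hba)

end SmoothStep

section Diffeo

/-- The group of increasing `C^n` diffeomorphisms of the real line, inside the group of all
order automorphisms. For `n = 0` these are the differentiable automorphisms with positive
derivative. -/
def increasingDiffeo (n : ℕ∞ω) : Subgroup (ℝ ≃o ℝ) where
  carrier := {f | ContDiff ℝ n f ∧ ∀ x, 0 < deriv f x}
  one_mem' := ⟨contDiff_id, fun x ↦ by simp⟩
  mul_mem' := by
    rintro f g ⟨hf, hf'⟩ ⟨hg, hg'⟩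
    refine ⟨hf.comp hg, fun x ↦ ?_⟩
    rw [RelIso.coe_mul, deriv_comp _ (differentiableAt_of_deriv_ne_zero (hf' _).ne')
      (differentiableAt_of_deriv_ne_zero (hg' x).ne')]
    exact mul_pos (hf' _) (hg' x)
  inv_mem' := by
    rintro f ⟨hf, hf'⟩
    have hderiv (x : ℝ) : HasDerivAt f (deriv f x) x :=
      (differentiableAt_of_deriv_ne_zero (hf' x).ne').hasDerivAt
    have hderiv_symm (y : ℝ) : HasDerivAt f.symm (deriv f (f.symm y))⁻¹ y :=
      (hderiv _).of_local_left_inverse f.symm.continuous.continuousAt (hf' _).ne'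
        (.of_forall f.apply_symm_apply)
    refine ⟨f.toHomeomorph.contDiff_symm_deriv (fun x ↦ (hf' x).ne') hderiv hf, fun y ↦ ?_⟩
    exact (hderiv_symm y).deriv ▸ inv_pos.2 (hf' _)

variable {n : ℕ∞ω}

theorem exists_increasingDiffeo_coe_eq {φ : ℝ → ℝ} (hφ : ContDiff ℝ n φ)
    (hφ' : ∀ x, 0 < deriv φ x) (hsurj : Surjective φ) :
    ∃ e ∈ increasingDiffeo n, ⇑e = φ :=
  ⟨(strictMono_of_deriv_pos hφ').orderIsoOfSurjective φ hsurj, ⟨hφ, hφ'⟩, rfl⟩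

theorem mulLeft₀_mem_increasingDiffeo {c : ℝ} (hc : 0 < c) :
    OrderIso.mulLeft₀ c hc ∈ increasingDiffeo n :=
  ⟨contDiff_const.mul contDiff_id, fun _ ↦ (deriv_const_mul_id c).symm ▸ hc⟩

variable {f : ℝ ≃o ℝ} {H : ℝ → ℝ}

theorem contDiff_orbitTerm (hf : f ∈ increasingDiffeo n) (hH : ContDiff ℝ n H) (k : ℤ) :
    ContDiff ℝ n (orbitTerm f H k) :=
  (hH.comp (zpow_mem hf k).1).sub contDiff_const

theorem hasDerivAt_orbitTerm (hf : f ∈ increasingDiffeo n) (hH : Differentiable ℝ H) (k : ℤ)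
    (x : ℝ) : HasDerivAt (orbitTerm f H k) (deriv H ((f ^ k) x) * deriv (f ^ k : ℝ ≃o ℝ) x) x :=
  ((hH _).hasDerivAt.comp x (differentiableAt_of_deriv_ne_zero
    ((zpow_mem hf k).2 x).ne').hasDerivAt).sub_const _

theorem deriv_orbitSum_pos (hf : f ∈ increasingDiffeo n) (hlt : ∀ x, x < f x)
    (hH : Differentiable ℝ H) (hmono : Monotone H) (hbot : ∀ᶠ y in atBot, H y = 0)
    (htop : ∀ᶠ y in atTop, H y = 1) {p : ℝ} (hpos : ∀ y ∈ Ico p (f p), 0 < deriv H y) (x : ℝ) :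
    0 < deriv (orbitSum f H) x := by
  have hderiv (k : ℤ) := hasDerivAt_orbitTerm hf hH k x
  refine deriv_finsum_pos (fun k ↦ (hderiv k).differentiableAt)
    (locallyFinite_support_orbitTerm hlt hbot htop) (fun k ↦ ?_) ?_
  · rw [(hderiv k).deriv]
    exact mul_nonneg hmono.deriv_nonneg ((zpow_mem hf k).2 x).le
  · obtain ⟨k, hk⟩ := exists_zpow_apply_mem_Ico hlt x p
    refine ⟨k, ?_⟩
    rw [(hderiv k).deriv]
    exact mul_pos (hpos _ hk) ((zpow_mem hf k).2 x)

theorem exists_increasingDiffeo_abel_eq (hn : n ≤ ∞) (hf : f ∈ increasingDiffeo n)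
    (hlt : ∀ x, x < f x) : ∃ G ∈ increasingDiffeo n, ∀ x, G (f x) = G x + 1 := by
  obtain ⟨H, hH, hmono, hzero, hone, hpos⟩ :=
    exists_contDiff_step (show (-1 : ℝ) < f 0 by linarith [hlt 0])
  have hbot : ∀ᶠ y in atBot, H y = 0 := (eventually_le_atBot _).mono hzero
  have htop : ∀ᶠ y in atTop, H y = 1 := (eventually_ge_atTop _).mono hone
  have hpos' : ∀ y ∈ Ico 0 (f 0), 0 < deriv H y := fun y hy ↦
    hpos y ⟨by linarith [hy.1], hy.2⟩
  have hAbel := orbitSum_apply_self hlt hbot htop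
  have hsmooth : ContDiff ℝ n (orbitSum f H) :=
    contDiff_finsum (contDiff_orbitTerm hf (hH.of_le hn))
      (locallyFinite_support_orbitTerm hlt hbot htop)
  obtain ⟨G, hG, hG_coe⟩ := exists_increasingDiffeo_coe_eq hsmooth
    (deriv_orbitSum_pos hf hlt (hH.differentiable (by simp)) hmono hbot htop hpos')
    (surjective_of_apply_eq_add_one hsmooth.continuous f.toEquiv hAbel)
  exact ⟨G, hG, hG_coe ▸ hAbel⟩

end Diffeo

theorem statement8_general {n : ℕ∞ω} (hn : n ≤ ∞) {ηl ηr : ℝ → ℝ}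
    (hl : ContDiff ℝ n ηl) (hr : ContDiff ℝ n ηr) (horder : ∀ x, ηr x < ηl x)
    (hl' : ∀ x, 0 < deriv ηl x) (hr' : ∀ x, 0 < deriv ηr x)
    (hl_surj : Surjective ηl) (hr_surj : Surjective ηr) {c : ℝ} (hc : 0 < c) :
    ∃ F G : ℝ → ℝ, ContDiff ℝ n F ∧ ContDiff ℝ n G ∧
      (∀ x, 0 < deriv F x) ∧ (∀ x, 0 < deriv G x) ∧
      Surjective F ∧ Surjective G ∧
      (∀ x, G (ηl x) = F x) ∧ (∀ x, G (ηr x) = F x - c) := by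
  obtain ⟨l, hl_mem, rfl⟩ := exists_increasingDiffeo_coe_eq hl hl' hl_surj
  obtain ⟨r, hr_mem, rfl⟩ := exists_increasingDiffeo_coe_eq hr hr' hr_surj
  have hlt (y : ℝ) : y < (l * r⁻¹) y := by
    simpa using horder (r⁻¹ y)
  obtain ⟨A, hA, hAbel⟩ :=
    exists_increasingDiffeo_abel_eq hn (mul_mem hl_mem (inv_mem hr_mem)) hlt
  have hG := mul_mem (mulLeft₀_mem_increasingDiffeo hc) hA
  have hF := mul_mem hG hl_mem
  refine ⟨_, _, hF.1, hG.1, hF.2, hG.2, OrderIso.surjective _, OrderIso.surjective _,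
    fun x ↦ rfl, fun x ↦ ?_⟩
  have hA_apply : A (l x) = A (r x) + 1 := by simpa using hAbel (r x)
  simp [hA_apply, mul_add]

theorem statement8 (ηl ηr : ℝ → ℝ)
    (hl : ContDiff ℝ 1 ηl) (hr : ContDiff ℝ 1 ηr)
    (horder : ∀ x, ηr x < ηl x)
    (ε M : ℝ) (hε : 0 < ε) (hεM : ε ≤ M)
    (hl' : ∀ x, ε ≤ deriv ηl x ∧ deriv ηl x ≤ M)
    (hr' : ∀ x, ε ≤ deriv ηr x ∧ deriv ηr x ≤ M) :
    ∃ F G : ℝ → ℝ, ContDiff ℝ 1 F ∧ ContDiff ℝ 1 G ∧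
      (∀ x, 0 < deriv F x) ∧ (∀ x, 0 < deriv G x) ∧
      Function.Surjective F ∧ Function.Surjective G ∧
      (∀ x, G (ηl x) = F x) ∧ (∀ x, G (ηr x) = F x - 2 * π) :=
  statement8_general (mod_cast le_top) hl hr horder
    (fun x ↦ hε.trans_le (hl' x).1) (fun x ↦ hε.trans_le (hr' x).1)
    (surjective_of_le_deriv (hl.differentiable one_ne_zero) hε fun x ↦ (hl' x).1)
    (surjective_of_le_deriv (hr.differentiable one_ne_zero) hε fun x ↦ (hr' x).1) two_pi_pos
end

section
/- Let V ⊆ ℝ² be open, let h be a Lorentzian metric on V, and let t, s : V → ℝ² be vector fields satisfying tᵀ h s = 0, tᵀ h t + sᵀ h s = 0 and tᵀ h t > 0 at every point of V. Let W ⊆ ℝ² be open with coordinates (τ̃, σ̃) and let x : W → V be differentiable with ∂x/∂τ̃ = t(x(τ̃,σ̃)) and ∂x/∂σ̃ = s(x(τ̃,σ̃)) on W. Then the pullback metric h̃(τ̃,σ̃) := (Dx(τ̃,σ̃))ᵀ · h(x(τ̃,σ̃)) · Dx(τ̃,σ̃) is conformally flat: h̃ = e^{2φ} · diag(1,−1),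 where e^{2φ}(τ̃,σ̃) := t(x(τ̃,σ̃))ᵀ h(x(τ̃,σ̃)) t(x(τ̃,σ̃)) > 0; in particular the Jacobian Dx is invertible at every point of W. -/
open Matrix

/-- Jacobian matrix of a map `x : ℝ² → ℝ²`: `(jac x p) α β = ∂_β x^α (p)`. -/
noncomputable def jac (x : (Fin 2 → ℝ) → (Fin 2 → ℝ)) (p : Fin 2 → ℝ) :
    Matrix (Fin 2) (Fin 2) ℝ :=
  Matrix.of fun α β => fderiv ℝ x p (Pi.single β 1) α

/-- The two-dimensional Minkowski metric `diag(1,−1)`. -/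
noncomputable def eta : Matrix (Fin 2) (Fin 2) ℝ := !![1, 0; 0, -1]

theorem col_jac (x : (Fin 2 → ℝ) → (Fin 2 → ℝ)) (p : Fin 2 → ℝ) (β : Fin 2) :
    (jac x p).col β = fderiv ℝ x p (Pi.single β 1) :=
  rfl

theorem det_smul_eta (c : ℝ) : (c • eta).det = -c ^ 2 := by
  simp [eta, det_fin_two, sq]

section Pullback

variable {n : Type*} [Fintype n]

theorem transpose_mul_mul_apply_eq_dotProduct_col {m R : Type*} [NonUnitalSemiring R]
    (h : Matrix n n R) (J : Matrix n m R) (i j : m) :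
    (Jᵀ * h * J) i j = J.col i ⬝ᵥ h *ᵥ J.col j := by
  rw [Matrix.mul_assoc]
  rfl

theorem transpose_mul_mul_eq_smul_eta {h : Matrix n n ℝ} (hsymm : h.IsSymm)
    {J : Matrix n (Fin 2) ℝ} (horth : J.col 0 ⬝ᵥ h *ᵥ J.col 1 = 0)
    (hnull : J.col 0 ⬝ᵥ h *ᵥ J.col 0 + J.col 1 ⬝ᵥ h *ᵥ J.col 1 = 0) :
    Jᵀ * h * J = (J.col 0 ⬝ᵥ h *ᵥ J.col 0) • eta := by
  have horth' : J.col 1 ⬝ᵥ h *ᵥ J.col 0 = 0 := by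
    rw [← hsymm.eq, dotProduct_transpose_mulVec, horth]
  have hopp : J.col 1 ⬝ᵥ h *ᵥ J.col 1 = -(J.col 0 ⬝ᵥ h *ᵥ J.col 0) :=
    eq_neg_of_add_eq_zero_right hnull
  ext i j
  rw [transpose_mul_mul_apply_eq_dotProduct_col]
  fin_cases i <;> fin_cases j <;> simp [eta, horth, horth', hopp]

end Pullback

theorem det_ne_zero_of_transpose_mul_mul_eq_smul_eta {h J : Matrix (Fin 2) (Fin 2) ℝ} {c : ℝ}
    (hc : c ≠ 0) (hJ : Jᵀ * h * J = c • eta) : J.det ≠ 0 := by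
  have hdet : (Jᵀ * h).det * J.det = -c ^ 2 := by
    rw [← det_mul, hJ, det_smul_eta]
  exact right_ne_zero_of_mul (hdet ▸ neg_ne_zero.mpr (pow_ne_zero 2 hc))

theorem statement11 (V : Set (Fin 2 → ℝ)) (hV : IsOpen V)
    (h : (Fin 2 → ℝ) → Matrix (Fin 2) (Fin 2) ℝ)
    (hsymm : ∀ v ∈ V, (h v).IsSymm) (hdet : ∀ v ∈ V, (h v).det < 0)
    (t s : (Fin 2 → ℝ) → Fin 2 → ℝ)
    (horth : ∀ v ∈ V, t v ⬝ᵥ (h v).mulVec (s v) = 0)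
    (hnull : ∀ v ∈ V, t v ⬝ᵥ (h v).mulVec (t v) + s v ⬝ᵥ (h v).mulVec (s v) = 0)
    (hpos : ∀ v ∈ V, 0 < t v ⬝ᵥ (h v).mulVec (t v))
    (W : Set (Fin 2 → ℝ)) (hW : IsOpen W)
    (x : (Fin 2 → ℝ) → (Fin 2 → ℝ)) (hxV : Set.MapsTo x W V)
    (hxdiff : DifferentiableOn ℝ x W)
    (hode : ∀ p ∈ W, fderiv ℝ x p (Pi.single 0 1) = t (x p) ∧
                     fderiv ℝ x p (Pi.single 1 1) = s (x p)) :
    ∀ p ∈ W,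
      (jac x p)ᵀ * h (x p) * jac x p = (t (x p) ⬝ᵥ (h (x p)).mulVec (t (x p))) • eta ∧
      0 < t (x p) ⬝ᵥ (h (x p)).mulVec (t (x p)) ∧
      (jac x p).det ≠ 0 := by
  intro p hp
  obtain ⟨hτ, hσ⟩ := hode p hp
  have hv : x p ∈ V := hxV hp
  have hconf : (jac x p)ᵀ * h (x p) * jac x p =
      (t (x p) ⬝ᵥ (h (x p)).mulVec (t (x p))) • eta := by
    have hcol₀ : (jac x p).col 0 = t (x p) := (col_jac x p 0).trans hτ
    have hcol₁ : (jac x p).col 1 = s (x p) := (col_jac x p 1).trans hσ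
    rw [← hcol₀]
    apply transpose_mul_mul_eq_smul_eta (hsymm _ hv)
    · rw [hcol₀, hcol₁, horth _ hv]
    · rw [hcol₀, hcol₁, hnull _ hv]
  exact ⟨hconf, hpos _ hv,
    det_ne_zero_of_transpose_mul_mul_eq_smul_eta (hpos _ hv).ne' hconf⟩
end
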